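/- Let G be a strongly connected directed graph with n nodes and unitary travel times, π > 0 a stationary distribution, and ε > 0 such that P^ε_{G,π} is nonempty. Then for P ∈ P^ε_{G,π}, J(P) ≥ H_rate(P), and equality J(P) = H_rate(P) holds if and only if P is a permutation matrix (in which case both sides equal 0). -/

import Mathlib

open scoped BigOperators
open Real

/-- The set of Markov chains `ε`-conforming to a directed graph with adjacency
relation `Adj` and stationary distribution `pivec`. -/
def Conf {n : ℕ} (Adj : Fin n → Fin n → Prop) (pivec : Fin n → ℝ) (ε : ℝ) :
    Set (Matrix (Fin n) (Fin n) ℝ) :=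
  {P | (∀ i j, Adj i j → ε ≤ P i j) ∧ (∀ i j, ¬ Adj i j → P i j = 0) ∧
    (∀ i, ∑ j, P i j = 1) ∧ (∀ j, ∑ i, pivec i * P i j = pivec j)}

/-- First hitting time probabilities for unitary travel times:
`F_1 = P` and `F_k(i,j) = Σ_{h≠j} p_{ih} F_{k−1}(h,j)` for `k ≥ 2`. -/
def IsHittingProbUnit {n : ℕ} (P : Matrix (Fin n) (Fin n) ℝ)
    (F : ℕ → Fin n → Fin n → ℝ) : Prop :=
  (∀ i j, F 1 i j = P i j) ∧
    ∀ k : ℕ, 2 ≤ k → ∀ i j,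
      F k i j = ∑ h : Fin n, if h = j then 0 else P i h * F (k - 1) h j

/-- The entropy rate `H_rate(P) = −Σ_i π_i Σ_j p_{ij} log p_{ij}`. -/
noncomputable def entropyRate {n : ℕ} (pivec : Fin n → ℝ)
    (P : Matrix (Fin n) (Fin n) ℝ) : ℝ :=
  ∑ i : Fin n, pivec i * ∑ j : Fin n, Real.negMulLog (P i j)

/-!
Fix a state `i` and let `T` be its return time. By the chain rule for entropy along the events
`T > 0, T > 1, …`, the entropy of `T` is `∑ k, ℙ(T > k) h(ℙ(T = k + 1 | T > k))`, where `h` is the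
binary entropy. Given `T > k`, the conditional return probability is the average of `p_{xi}` over
the position `x` at time `k`, so Jensen's inequality bounds the `k`-th term below by
`∑ x, ℙ(X_k = x, T > k) h(p_{xi})`. The expected number of visits to `x` before returning to `i` is
`π_x / π_i` whenever `p_{xi} ≠ 0`, and summing over `k` and `i` gives
`J(P) ≥ ∑ x, π_x ∑ i, h(p_{xi})`. Since `h(p)` exceeds `-p log p` by `-(1 - p) log (1 - p)`, this
dominates the entropy rate, with equality only if all the entries of `P` are `0` or `1`. As `π` is
positive and invariant, no column of such a `P` vanishes, so `P` is a permutation matrix.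
-/

open Matrix Finset Filter Topology

section Entropy

theorem mul_binEntropy (m q : ℝ) :
    m * binEntropy q = negMulLog (m * q) + negMulLog (m * (1 - q)) - negMulLog m := by
  rw [negMulLog_mul, negMulLog_mul, binEntropy_eq_negMulLog_add_negMulLog_one_sub]
  ring

theorem negMulLog_le_binEntropy {p : ℝ} (hp₀ : 0 ≤ p) (hp₁ : p ≤ 1) :
    negMulLog p ≤ binEntropy p := by
  rw [binEntropy_eq_negMulLog_add_negMulLog_one_sub]
  linarith [negMulLog_nonneg (sub_nonneg.2 hp₁) (sub_le_self 1 hp₀)]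

theorem eq_zero_or_one_of_negMulLog_eq_binEntropy {p : ℝ} (hp₁ : p ≤ 1)
    (h : negMulLog p = binEntropy p) : p = 0 ∨ p = 1 := by
  rw [binEntropy_eq_negMulLog_add_negMulLog_one_sub, left_eq_add, negMulLog, mul_eq_zero,
    log_eq_zero] at h
  grind

theorem concaveOn_sum_mul_le {ι : Type*} {t : Finset ι} {s : Set ℝ} {f : ℝ → ℝ} {m q : ι → ℝ}
    (hf : ConcaveOn ℝ s f) (hm : ∀ x ∈ t, 0 ≤ m x) (hq : ∀ x ∈ t, q x ∈ s) :
    ∑ x ∈ t, m x * f (q x) ≤ (∑ x ∈ t, m x) * f ((∑ x ∈ t, m x * q x) / ∑ x ∈ t, m x) := by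
  rcases (sum_nonneg hm).eq_or_lt' with hzero | hpos
  · have hm_zero := (sum_eq_zero_iff_of_nonneg hm).1 hzero
    rw [hzero, zero_mul, sum_eq_zero fun x hx => by rw [hm_zero x hx, zero_mul]]
  · have hjensen := hf.le_map_centerMass hm hpos hq
    simpa only [centerMass, smul_eq_mul, Function.comp_apply, inv_mul_eq_div,
      div_le_iff₀' hpos] using hjensen

variable {S : ℕ → ℝ}

theorem mul_binEntropy_sub_succ_div (hS : Antitone S) (hS_nonneg : ∀ k, 0 ≤ S k) (k : ℕ) :
    S k * binEntropy ((S k - S (k + 1)) / S k) =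
      negMulLog (S k - S (k + 1)) + negMulLog (S (k + 1)) - negMulLog (S k) := by
  have hmul : S k * ((S k - S (k + 1)) / S k) = S k - S (k + 1) :=
    mul_div_cancel_of_imp' fun hzero => by linarith [hS k.le_succ, hS_nonneg (k + 1)]
  rw [mul_binEntropy, mul_sub, hmul, mul_one, sub_sub_cancel]

theorem summable_mul_binEntropy {q : ℕ → ℝ} (hS_nonneg : ∀ k, 0 ≤ S k) (hS_sum : Summable S)
    (hq : ∀ k, q k ∈ Set.Icc 0 1) : Summable fun k => S k * binEntropy (q k) :=
  .of_nonneg_of_le (fun k => mul_nonneg (hS_nonneg k) (binEntropy_nonneg (hq k).1 (hq k).2))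
    (fun k => mul_le_mul_of_nonneg_left binEntropy_le_log_two (hS_nonneg k))
    (hS_sum.mul_right (log 2))

theorem sub_succ_div_mem_Icc (hS : Antitone S) (hS_nonneg : ∀ k, 0 ≤ S k) (k : ℕ) :
    (S k - S (k + 1)) / S k ∈ Set.Icc 0 1 :=
  ⟨div_nonneg (sub_nonneg.2 (hS k.le_succ)) (hS_nonneg k),
    div_le_one_of_le₀ (sub_le_self _ (hS_nonneg _)) (hS_nonneg k)⟩

-- Chain rule: if `S k = ℙ(T > k)`, the left-hand side lists the terms of the entropy of `T`.
theorem hasSum_negMulLog_sub_succ (hS : Antitone S) (hS_zero : S 0 = 1) (hS_sum : Summable S) :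
    HasSum (fun k => negMulLog (S k - S (k + 1)))
      (∑' k, S k * binEntropy ((S k - S (k + 1)) / S k)) := by
  have hS_nonneg (k : ℕ) : 0 ≤ S k := hS.le_of_tendsto hS_sum.tendsto_atTop_zero k
  have hS_le_one (k : ℕ) : S k ≤ 1 := hS_zero ▸ hS k.zero_le
  have hpartial (N : ℕ) : ∑ k ∈ range N, negMulLog (S k - S (k + 1)) =
      ∑ k ∈ range N, S k * binEntropy ((S k - S (k + 1)) / S k) - negMulLog (S N) := by
    simp only [mul_binEntropy_sub_succ_div hS hS_nonneg, add_sub_assoc, sum_add_distrib,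
      sum_range_sub fun k => negMulLog (S k), hS_zero, negMulLog_one]
    ring
  have htail : Tendsto (fun N => negMulLog (S N)) atTop (𝓝 0) := by
    simpa only [negMulLog_zero, Function.comp_def] using
      (continuous_negMulLog.tendsto 0).comp hS_sum.tendsto_atTop_zero
  rw [hasSum_iff_tendsto_nat_of_nonneg fun k => negMulLog_nonneg (sub_nonneg.2 (hS k.le_succ))
    (by linarith [hS_le_one k, hS_nonneg (k + 1)])]
  simp only [hpartial]
  simpa only [sub_zero] using (summable_mul_binEntropy hS_nonneg hS_sum
    (sub_succ_div_mem_Icc hS hS_nonneg)).hasSum.tendsto_sum_nat.sub htail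

end Entropy

section FirstPassage

variable {ι : Type*} [Fintype ι] [DecidableEq ι]

/-- The transition matrix of the chain `P` killed when it enters `j`: the `x`-th entry of row `i` of
its `k`-th power is the taboo probability `ℙ_i(X_k = x, X_1 ≠ j, …, X_k ≠ j)`. -/
def tabooMatrix (P : Matrix ι ι ℝ) (j : ι) : Matrix ι ι ℝ := P.updateCol j 0

/-- The probability that the chain `P` started at `i` first enters `j` (at a positive time) at time
`k + 1`; the shift makes every `k : ℕ` meaningful. -/
def firstPassageProb (P : Matrix ι ι ℝ) (k : ℕ) (i j : ι) : ℝ := (tabooMatrix P j ^ k * P) i j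

/-- The probability that the chain `P` started at `i` does not enter `j` during the times
`1, …, k`. -/
def firstPassageTail (P : Matrix ι ι ℝ) (k : ℕ) (i j : ι) : ℝ := ∑ x, (tabooMatrix P j ^ k) i x

variable {P : Matrix ι ι ℝ}

theorem firstPassageProb_zero (P : Matrix ι ι ℝ) (i j : ι) : firstPassageProb P 0 i j = P i j := by
  rw [firstPassageProb, pow_zero, one_mul]

theorem firstPassageProb_succ (P : Matrix ι ι ℝ) (k : ℕ) (i j : ι) :
    firstPassageProb P (k + 1) i j =
      ∑ h, if h = j then 0 else P i h * firstPassageProb P k h j := by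
  simp only [firstPassageProb, pow_succ', mul_assoc]
  rw [mul_apply]
  simp only [tabooMatrix, updateCol_apply, Pi.zero_apply, ite_mul, zero_mul]

theorem tabooMatrix_pow_nonneg (hP : ∀ i j, 0 ≤ P i j) (j : ι) (k : ℕ) (i x : ι) :
    0 ≤ (tabooMatrix P j ^ k) i x := by
  induction k generalizing i with
  | zero => rw [pow_zero, one_apply]; positivity
  | succ k ih =>
    rw [pow_succ', mul_apply]
    refine sum_nonneg fun y _ => mul_nonneg ?_ (ih y)
    rw [tabooMatrix, updateCol_apply]
    split_ifs
    exacts [le_rfl, hP i y]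

theorem vecMul_tabooMatrix (P : Matrix ι ι ℝ) (v : ι → ℝ) (j : ι) :
    v ᵥ* tabooMatrix P j = v ᵥ* P - Pi.single j ((v ᵥ* P) j) := by
  ext x
  by_cases hx : x = j
  · subst hx
    simp [tabooMatrix, vecMul, dotProduct]
  · simp [tabooMatrix, vecMul, dotProduct, hx]

theorem sum_vecMul_tabooMatrix (hP : P ∈ rowStochastic ℝ ι) (v : ι → ℝ) (j : ι) :
    ∑ x, (v ᵥ* tabooMatrix P j) x = ∑ x, v x - (v ᵥ* P) j := by
  have hmass : ∑ x, (v ᵥ* P) x = ∑ x, v x := by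
    simp only [← dotProduct_one, ← dotProduct_mulVec, one_vecMul_of_mem_rowStochastic hP]
  simp only [vecMul_tabooMatrix, Pi.sub_apply, sum_sub_distrib, hmass, sum_pi_single', mem_univ,
    if_true]

theorem firstPassageTail_zero (P : Matrix ι ι ℝ) (i j : ι) : firstPassageTail P 0 i j = 1 := by
  simp [firstPassageTail, one_apply]

theorem firstPassageTail_nonneg (hP : ∀ i j, 0 ≤ P i j) (k : ℕ) (i j : ι) :
    0 ≤ firstPassageTail P k i j :=
  sum_nonneg fun x _ => tabooMatrix_pow_nonneg hP j k i x

theorem firstPassageProb_nonneg (hP : ∀ i j, 0 ≤ P i j) (k : ℕ) (i j : ι) :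
    0 ≤ firstPassageProb P k i j :=
  sum_nonneg fun x _ => mul_nonneg (tabooMatrix_pow_nonneg hP j k i x) (hP x j)

theorem firstPassageTail_sub_succ (hP : P ∈ rowStochastic ℝ ι) (k : ℕ) (i j : ι) :
    firstPassageTail P k i j - firstPassageTail P (k + 1) i j = firstPassageProb P k i j := by
  simp only [firstPassageTail, firstPassageProb, pow_succ, mul_apply_eq_vecMul,
    sum_vecMul_tabooMatrix hP, sub_sub_cancel]

theorem firstPassageTail_antitone (hP : P ∈ rowStochastic ℝ ι) (i j : ι) :
    Antitone fun k => firstPassageTail P k i j :=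
  antitone_nat_of_succ_le fun k => sub_nonneg.1 <| by
    rw [firstPassageTail_sub_succ hP]
    exact firstPassageProb_nonneg (fun _ _ => nonneg_of_mem_rowStochastic hP) k i j

end FirstPassage

section Stationary

variable {ι : Type*} [Fintype ι] [DecidableEq ι] {P : Matrix ι ι ℝ} {w : ι → ℝ} {i x : ι}

theorem vecMul_tabooMatrix_pow_succ (hw : w ᵥ* P = w) (i : ι) (k : ℕ) :
    w ᵥ* tabooMatrix P i ^ (k + 1) =
      w ᵥ* tabooMatrix P i ^ k - w i • (tabooMatrix P i ^ k) i := by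
  rw [pow_succ', ← vecMul_vecMul, vecMul_tabooMatrix, hw, sub_vecMul, single_vecMul]
  rfl

theorem mul_sum_range_tabooMatrix_pow (hw : w ᵥ* P = w) (i x : ι) (N : ℕ) :
    w i * ∑ k ∈ range N, (tabooMatrix P i ^ k) i x = w x - (w ᵥ* tabooMatrix P i ^ N) x := by
  have hstep (k : ℕ) : w i * (tabooMatrix P i ^ k) i x =
      (w ᵥ* tabooMatrix P i ^ k) x - (w ᵥ* tabooMatrix P i ^ (k + 1)) x := by
    simp [vecMul_tabooMatrix_pow_succ hw]
  rw [mul_sum, sum_congr rfl fun k _ => hstep k,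
    sum_range_sub' fun k => (w ᵥ* tabooMatrix P i ^ k) x, pow_zero, vecMul_one]

-- Both sides are the mass that the chain killed on entering `i` loses at time `k + 1`.
theorem vecMul_tabooMatrix_pow_vecMul (hP : P ∈ rowStochastic ℝ ι) (hw : w ᵥ* P = w) (i : ι)
    (k : ℕ) : (w ᵥ* tabooMatrix P i ^ k ᵥ* P) i = w i * firstPassageTail P k i i := by
  have hmass := sum_vecMul_tabooMatrix hP (w ᵥ* tabooMatrix P i ^ k) i
  rw [vecMul_vecMul, ← pow_succ, vecMul_tabooMatrix_pow_succ hw] at hmass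
  simpa only [firstPassageTail, Pi.sub_apply, Pi.smul_apply, smul_eq_mul, sum_sub_distrib,
    ← mul_sum, sub_right_inj, eq_comm] using hmass

theorem vecMul_tabooMatrix_pow_nonneg (hP : ∀ i j, 0 ≤ P i j) (hw_nonneg : ∀ x, 0 ≤ w x)
    (i : ι) (k : ℕ) (x : ι) : 0 ≤ (w ᵥ* tabooMatrix P i ^ k) x :=
  sum_nonneg fun y _ => mul_nonneg (hw_nonneg y) (tabooMatrix_pow_nonneg hP i k y x)

theorem summable_tabooMatrix_pow (hP : ∀ i j, 0 ≤ P i j) (hw_nonneg : ∀ x, 0 ≤ w x)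
    (hw : w ᵥ* P = w) (hi : 0 < w i) (x : ι) : Summable fun k => (tabooMatrix P i ^ k) i x := by
  refine summable_of_sum_range_le (c := w x / w i)
    (fun k => tabooMatrix_pow_nonneg hP i k i x) fun N => ?_
  rw [le_div_iff₀' hi, mul_sum_range_tabooMatrix_pow hw]
  exact sub_le_self _ (vecMul_tabooMatrix_pow_nonneg hP hw_nonneg i N x)

theorem summable_firstPassageTail (hP : ∀ i j, 0 ≤ P i j) (hw_nonneg : ∀ x, 0 ≤ w x)
    (hw : w ᵥ* P = w) (hi : 0 < w i) : Summable fun k => firstPassageTail P k i i :=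
  summable_sum fun x _ => summable_tabooMatrix_pow hP hw_nonneg hw hi x

-- A fraction `P x i` of the mass at `x` is lost at the next step, and the loss tends to `0`.
theorem tendsto_vecMul_tabooMatrix_pow (hP : P ∈ rowStochastic ℝ ι) (hw_nonneg : ∀ x, 0 ≤ w x)
    (hw : w ᵥ* P = w) (hi : 0 < w i) (hx : P x i ≠ 0) :
    Tendsto (fun k => (w ᵥ* tabooMatrix P i ^ k) x) atTop (𝓝 0) := by
  have hP_nonneg (y z : ι) : 0 ≤ P y z := nonneg_of_mem_rowStochastic hP
  have hnonneg := vecMul_tabooMatrix_pow_nonneg hP_nonneg hw_nonneg i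
  have hbound (k : ℕ) :
      (w ᵥ* tabooMatrix P i ^ k) x ≤ w i * firstPassageTail P k i i / P x i := by
    rw [le_div_iff₀ ((hP_nonneg x i).lt_of_ne' hx), ← vecMul_tabooMatrix_pow_vecMul hP hw]
    exact single_le_sum (f := fun y => (w ᵥ* tabooMatrix P i ^ k) y * P y i)
      (fun y _ => mul_nonneg (hnonneg k y) (hP_nonneg y i)) (mem_univ x)
  have htail := (summable_firstPassageTail hP_nonneg hw_nonneg hw hi).tendsto_atTop_zero
  refine squeeze_zero (fun k => hnonneg k x) hbound ?_
  simpa only [mul_zero, zero_div] using (htail.const_mul (w i)).div_const (P x i)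

theorem hasSum_tabooMatrix_pow (hP : P ∈ rowStochastic ℝ ι) (hw_nonneg : ∀ x, 0 ≤ w x)
    (hw : w ᵥ* P = w) (hi : 0 < w i) (hx : P x i ≠ 0) :
    HasSum (fun k => (tabooMatrix P i ^ k) i x) (w x / w i) := by
  have hP_nonneg (y z : ι) : 0 ≤ P y z := nonneg_of_mem_rowStochastic hP
  have hpartial (N : ℕ) : ∑ k ∈ range N, (tabooMatrix P i ^ k) i x =
      (w x - (w ᵥ* tabooMatrix P i ^ N) x) / w i := by
    rw [eq_div_iff hi.ne', mul_comm, mul_sum_range_tabooMatrix_pow hw]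
  rw [hasSum_iff_tendsto_nat_of_nonneg fun k => tabooMatrix_pow_nonneg hP_nonneg i k i x]
  simp only [hpartial]
  simpa only [sub_zero] using
    ((tendsto_vecMul_tabooMatrix_pow hP hw_nonneg hw hi hx).const_sub (w x)).div_const (w i)

end Stationary

section ReturnTimeEntropy

variable {ι : Type*} [Fintype ι] [DecidableEq ι] {P : Matrix ι ι ℝ} {w : ι → ℝ} {i : ι}

/-- The return time entropy `J(P)` of the chain `P` with respect to the weights `w`. -/
noncomputable def returnTimeEntropy (w : ι → ℝ) (P : Matrix ι ι ℝ) : ℝ :=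
  ∑ i, w i * ∑' k, negMulLog (firstPassageProb P k i i)

theorem sum_tabooMatrix_pow_mul_binEntropy_le (hP : P ∈ rowStochastic ℝ ι) (k : ℕ) (i j : ι) :
    ∑ x, (tabooMatrix P j ^ k) i x * binEntropy (P x j) ≤
      firstPassageTail P k i j *
        binEntropy (firstPassageProb P k i j / firstPassageTail P k i j) :=
  concaveOn_sum_mul_le strictConcave_binEntropy.concaveOn
    (fun x _ => tabooMatrix_pow_nonneg (fun _ _ => nonneg_of_mem_rowStochastic hP) j k i x)
    fun _ _ => ⟨nonneg_of_mem_rowStochastic hP, le_one_of_mem_rowStochastic hP⟩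

theorem sum_mul_binEntropy_le_tsum_negMulLog (hP : P ∈ rowStochastic ℝ ι)
    (hw_nonneg : ∀ x, 0 ≤ w x) (hw : w ᵥ* P = w) (hi : 0 < w i) :
    ∑ x, w x * binEntropy (P x i) ≤ w i * ∑' k, negMulLog (firstPassageProb P k i i) := by
  have hP_nonneg (y z : ι) : 0 ≤ P y z := nonneg_of_mem_rowStochastic hP
  have hanti := firstPassageTail_antitone hP i i
  have hsummable := summable_firstPassageTail hP_nonneg hw_nonneg hw hi
  have htail_nonneg (k : ℕ) := firstPassageTail_nonneg hP_nonneg k i i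
  have hvisits : HasSum (fun k => ∑ x, (tabooMatrix P i ^ k) i x * binEntropy (P x i))
      (∑ x, w x / w i * binEntropy (P x i)) := by
    refine hasSum_sum fun x _ => ?_
    by_cases hx : P x i = 0
    · simp [hx]
    · exact (hasSum_tabooMatrix_pow hP hw_nonneg hw hi hx).mul_right _
  have hchain := hasSum_negMulLog_sub_succ hanti (firstPassageTail_zero P i i) hsummable
  have hhazard := (summable_mul_binEntropy htail_nonneg hsummable
    (sub_succ_div_mem_Icc hanti htail_nonneg)).hasSum
  simp only [firstPassageTail_sub_succ hP] at hchain hhazard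
  calc ∑ x, w x * binEntropy (P x i)
    _ = w i * ∑ x, w x / w i * binEntropy (P x i) := by
      simp only [mul_sum, ← mul_assoc, mul_div_cancel₀ _ hi.ne']
    _ ≤ w i * ∑' k, negMulLog (firstPassageProb P k i i) := by
      rw [hchain.tsum_eq]
      exact mul_le_mul_of_nonneg_left (hasSum_le
        (fun k => sum_tabooMatrix_pow_mul_binEntropy_le hP k i i) hvisits hhazard) hi.le

theorem sum_mul_sum_binEntropy_le_returnTimeEntropy (hP : P ∈ rowStochastic ℝ ι)
    (hw_pos : ∀ x, 0 < w x) (hw : w ᵥ* P = w) :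
    ∑ x, w x * ∑ i, binEntropy (P x i) ≤ returnTimeEntropy w P := by
  simp only [mul_sum]
  rw [sum_comm]
  exact sum_le_sum fun i _ =>
    sum_mul_binEntropy_le_tsum_negMulLog hP (fun x => (hw_pos x).le) hw (hw_pos i)

theorem sum_negMulLog_le_sum_binEntropy (hP : P ∈ rowStochastic ℝ ι) (x : ι) :
    ∑ i, negMulLog (P x i) ≤ ∑ i, binEntropy (P x i) :=
  sum_le_sum fun _ _ =>
    negMulLog_le_binEntropy (nonneg_of_mem_rowStochastic hP) (le_one_of_mem_rowStochastic hP)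

theorem eq_zero_or_one_of_sum_negMulLog_eq_sum_binEntropy (hP : P ∈ rowStochastic ℝ ι)
    (hw_pos : ∀ x, 0 < w x)
    (h : ∑ x, w x * ∑ i, negMulLog (P x i) = ∑ x, w x * ∑ i, binEntropy (P x i)) (x i : ι) :
    P x i = 0 ∨ P x i = 1 := by
  have hrow := (sum_eq_sum_iff_of_le fun y _ => mul_le_mul_of_nonneg_left
    (sum_negMulLog_le_sum_binEntropy hP y) (hw_pos y).le).1 h x (mem_univ x)
  have hentry := (sum_eq_sum_iff_of_le fun j _ => negMulLog_le_binEntropy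
    (nonneg_of_mem_rowStochastic hP) (le_one_of_mem_rowStochastic hP)).1
    (mul_left_cancel₀ (hw_pos x).ne' hrow) i (mem_univ i)
  exact eq_zero_or_one_of_negMulLog_eq_binEntropy (le_one_of_mem_rowStochastic hP) hentry

end ReturnTimeEntropy

section Permutation

variable {ι : Type*} [Fintype ι] [DecidableEq ι] {P : Matrix ι ι ℝ} {w : ι → ℝ}

theorem exists_eq_ite_of_eq_zero_or_one {κ : Type*} {A : Matrix κ ι ℝ}
    (hrow : ∀ i, ∑ j, A i j = 1) (hA : ∀ i j, A i j = 0 ∨ A i j = 1) :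
    ∃ s : κ → ι, ∀ i j, A i j = if s i = j then 1 else 0 := by
  have hunique (i : κ) : ∃ s, ∀ j, A i j = 1 ↔ j = s := by
    have hind (j : ι) : A i j = if A i j = 1 then 1 else 0 := by
      rcases hA i j with h | h <;> simp [h]
    have hcard : #{j | A i j = 1} = 1 := by
      exact_mod_cast (sum_boole _ _).symm.trans ((sum_congr rfl fun j _ => hind j).symm.trans
        (hrow i))
    obtain ⟨s, hs⟩ := card_eq_one.1 hcard
    exact ⟨s, fun j => by simpa using Finset.ext_iff.1 hs j⟩
  choose s hs using hunique
  refine ⟨s, fun i j => ?_⟩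
  split_ifs with h
  · exact (hs i j).2 h.symm
  · exact (hA i j).resolve_right fun h_one => h ((hs i j).1 h_one).symm

theorem exists_perm_of_eq_zero_or_one (hP : P ∈ rowStochastic ℝ ι) (hw_ne : ∀ x, w x ≠ 0)
    (hw : w ᵥ* P = w) (h : ∀ i j, P i j = 0 ∨ P i j = 1) :
    ∃ σ : Equiv.Perm ι, ∀ i j, P i j = if σ i = j then 1 else 0 := by
  obtain ⟨s, hs⟩ := exists_eq_ite_of_eq_zero_or_one (sum_row_of_mem_rowStochastic hP) h
  have hsurj : Function.Surjective s := by
    intro j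
    by_contra! hj
    have hcol (i : ι) : P i j = 0 := by rw [hs, if_neg (hj i)]
    apply hw_ne j
    rw [← hw]
    simp [vecMul, dotProduct, hcol]
  exact ⟨.ofBijective s (Finite.surjective_iff_bijective.1 hsurj), hs⟩

theorem firstPassageProb_eq_zero_or_one {s : ι → ι} (hP : ∀ i j, P i j = if s i = j then 1 else 0)
    (k : ℕ) (i j : ι) : firstPassageProb P k i j = 0 ∨ firstPassageProb P k i j = 1 := by
  induction k generalizing i with
  | zero =>
    rw [firstPassageProb_zero, hP]
    split_ifs <;> simp
  | succ k ih =>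
    have hsucc : firstPassageProb P (k + 1) i j =
        if s i = j then 0 else firstPassageProb P k (s i) j := by
      rw [firstPassageProb_succ, sum_eq_single (s i) (by simp +contextual [hP, eq_comm]) (by simp)]
      simp [hP]
    rw [hsucc]
    split_ifs
    exacts [.inl rfl, ih (s i)]

theorem returnTimeEntropy_eq_zero {s : ι → ι} (hP : ∀ i j, P i j = if s i = j then 1 else 0)
    (w : ι → ℝ) : returnTimeEntropy w P = 0 := by
  have hzero (k : ℕ) (i : ι) : negMulLog (firstPassageProb P k i i) = 0 := by
    rcases firstPassageProb_eq_zero_or_one hP k i i with h | h <;> simp [h]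
  simp [returnTimeEntropy, hzero]

theorem sum_mul_sum_negMulLog_eq_zero {s : ι → ι} (hP : ∀ i j, P i j = if s i = j then 1 else 0)
    (w : ι → ℝ) : ∑ x, w x * ∑ i, negMulLog (P x i) = 0 := by
  simp [hP, apply_ite]

end Permutation

theorem return_time_entropy_lower_bound_general {ι : Type*} [Fintype ι] [DecidableEq ι]
    {P : Matrix ι ι ℝ} {w : ι → ℝ} (hP : P ∈ rowStochastic ℝ ι) (hw_pos : ∀ x, 0 < w x)
    (hw : w ᵥ* P = w) :
    ∑ x, w x * ∑ i, negMulLog (P x i) ≤ returnTimeEntropy w P ∧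
      (returnTimeEntropy w P = ∑ x, w x * ∑ i, negMulLog (P x i) ↔
        ∃ σ : Equiv.Perm ι, ∀ i j, P i j = if σ i = j then 1 else 0) ∧
      ((∃ σ : Equiv.Perm ι, ∀ i j, P i j = if σ i = j then 1 else 0) →
        returnTimeEntropy w P = 0 ∧ ∑ x, w x * ∑ i, negMulLog (P x i) = 0) := by
  have hrate : ∑ x, w x * ∑ i, negMulLog (P x i) ≤ ∑ x, w x * ∑ i, binEntropy (P x i) :=
    sum_le_sum fun x _ =>
      mul_le_mul_of_nonneg_left (sum_negMulLog_le_sum_binEntropy hP x) (hw_pos x).le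
  have hreturn := sum_mul_sum_binEntropy_le_returnTimeEntropy hP hw_pos hw
  have hperm : (∃ σ : Equiv.Perm ι, ∀ i j, P i j = if σ i = j then 1 else 0) →
      returnTimeEntropy w P = 0 ∧ ∑ x, w x * ∑ i, negMulLog (P x i) = 0 :=
    fun ⟨_, hσ⟩ => ⟨returnTimeEntropy_eq_zero hσ w, sum_mul_sum_negMulLog_eq_zero hσ w⟩
  refine ⟨hrate.trans hreturn, ⟨fun heq => ?_, fun h => ?_⟩, hperm⟩
  · exact exists_perm_of_eq_zero_or_one hP (fun x => (hw_pos x).ne') hw <|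
      eq_zero_or_one_of_sum_negMulLog_eq_sum_binEntropy hP hw_pos <|
        hrate.antisymm (hreturn.trans heq.le)
  · rw [(hperm h).1, (hperm h).2]

section Conforming

variable {n : ℕ} {Adj : Fin n → Fin n → Prop} {w : Fin n → ℝ} {ε : ℝ}
  {P : Matrix (Fin n) (Fin n) ℝ}

theorem mem_rowStochastic_of_mem_Conf (hε : 0 ≤ ε) (hP : P ∈ Conf Adj w ε) :
    P ∈ rowStochastic ℝ (Fin n) := by
  refine mem_rowStochastic_iff_sum.2 ⟨fun i j => ?_, hP.2.2.1⟩
  by_cases h : Adj i j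
  · exact hε.trans (hP.1 i j h)
  · exact (hP.2.1 i j h).ge

theorem vecMul_eq_self_of_mem_Conf (hP : P ∈ Conf Adj w ε) : w ᵥ* P = w :=
  funext hP.2.2.2

theorem IsHittingProbUnit.eq_firstPassageProb {F : ℕ → Fin n → Fin n → ℝ}
    (hF : IsHittingProbUnit P F) (k : ℕ) (i j : Fin n) :
    F (k + 1) i j = firstPassageProb P k i j := by
  induction k generalizing i with
  | zero => rw [hF.1, firstPassageProb_zero]
  | succ k ih =>
    rw [hF.2 (k + 1 + 1) (by lia), firstPassageProb_succ]
    simp only [Nat.add_sub_cancel, ih]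

end Conforming

/-- for unitary travel times, `J(P) ≥ H_rate(P)` on the
`ε`-conforming set, with equality if and only if `P` is a permutation matrix,
in which case both sides equal `0`. -/
theorem return_time_entropy_lower_bound {n : ℕ}
    (Adj : Fin n → Fin n → Prop) (pivec : Fin n → ℝ) (ε : ℝ)
    (hconn : ∀ i j, Relation.ReflTransGen Adj i j)
    (hpi : ∀ i, 0 < pivec i) (hpisum : ∑ i, pivec i = 1)
    (hε : 0 < ε) (hne : (Conf Adj pivec ε).Nonempty)
    (F : Matrix (Fin n) (Fin n) ℝ → ℕ → Fin n → Fin n → ℝ)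
    (hF : ∀ P ∈ Conf Adj pivec ε, IsHittingProbUnit P (F P)) :
    ∀ P ∈ Conf Adj pivec ε,
      entropyRate pivec P ≤
          (∑ i : Fin n, pivec i * ∑' k : ℕ, Real.negMulLog (F P (k + 1) i i)) ∧
      ((∑ i : Fin n, pivec i * ∑' k : ℕ, Real.negMulLog (F P (k + 1) i i)) =
          entropyRate pivec P ↔
        ∃ σ : Equiv.Perm (Fin n), ∀ i j, P i j = if σ i = j then 1 else 0) ∧
      ((∃ σ : Equiv.Perm (Fin n), ∀ i j, P i j = if σ i = j then 1 else 0) →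
        (∑ i : Fin n, pivec i * ∑' k : ℕ, Real.negMulLog (F P (k + 1) i i)) = 0 ∧
          entropyRate pivec P = 0) := by
  intro P hP
  simp only [(hF P hP).eq_firstPassageProb]
  exact return_time_entropy_lower_bound_general (mem_rowStochastic_of_mem_Conf hε.le hP) hpi
    (vecMul_eq_self_of_mem_Conf hP)
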